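/- arXiv:2206.02132 — 2 statements merged into one kernel-verified Lean document; each statement's English description precedes it below -/
import Mathlib

section
/- (Maximum principle.) Let Ω be a G-invariant bounded domain in ℝ^{d+1} and let u be continuous on the closure of Ω. Assume that u is of class C² on the open set {(x,y) ∈ Ω : u(x,y) > 0} and that Δ_κu ≥ 0 at every point of this set whose x-coordinate is regular. If u ≤ 0 on ∂Ω, then u ≤ 0 on all of Ω. -/
open MeasureTheory Filter Metric
open scoped RealInnerProductSpace Topology

noncomputable section

/-- Euclidean space `ℝ^d`. -/
abbrev Ed (d : ℕ) : Type := EuclideanSpace ℝ (Fin d)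

/-- The reflection `σ_α(x) = x - ⟨α,x⟩α` (for roots normalized by `⟨α,α⟩ = 2`). -/
def reflAt {d : ℕ} (α x : Ed d) : Ed d := x - ⟪α, x⟫ • α

/-- The reflection group `G` generated by the reflections `σ_α`, `α ∈ R`, realized as the
submonoid of self-maps of `ℝ^d` generated by the reflections (each reflection is an
involution, so this is in fact a group of transformations). -/
def dunklGroup {d : ℕ} (R : Finset (Ed d)) : Submonoid (Function.End (Ed d)) :=
  Submonoid.closure {f : Function.End (Ed d) | ∃ α ∈ R, f = reflAt α}

/-- A (normalized) root system `R` with positive subsystem `Rp` and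
`G`-invariant nonnegative multiplicity function `κ`. -/
structure IsRootSystem {d : ℕ} (R Rp : Finset (Ed d)) (κ : Ed d → ℝ) : Prop where
  nonzero : ∀ α ∈ R, α ≠ (0 : Ed d)
  norm_two : ∀ α ∈ R, ⟪α, α⟫ = (2 : ℝ)
  refl_mem : ∀ α ∈ R, ∀ β ∈ R, reflAt α β ∈ R
  pos_sub : Rp ⊆ R
  pos_split : ∀ α ∈ R, (α ∈ Rp ∧ ¬(-α ∈ Rp)) ∨ (¬(α ∈ Rp) ∧ -α ∈ Rp)
  kappa_nonneg : ∀ α ∈ R, 0 ≤ κ α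
  kappa_inv : ∀ σ ∈ dunklGroup R, ∀ α ∈ R, κ (σ α) = κ α

/-- `x ∈ ℝ^d` is regular if `⟨α,x⟩ ≠ 0` for all roots `α ∈ R`. -/
def isRegular {d : ℕ} (R : Finset (Ed d)) (x : Ed d) : Prop :=
  ∀ α ∈ R, ⟪α, x⟫ ≠ (0 : ℝ)

/-- Second directional derivative of `u` at `p` in direction `v`. -/
def pd2 {d : ℕ} (u : Ed d × ℝ → ℝ) (p v : Ed d × ℝ) : ℝ :=
  fderiv ℝ (fun q => fderiv ℝ u q v) p v

/-- The Euclidean Laplacian on `ℝ^{d+1} = ℝ^d × ℝ`. -/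
def lapE {d : ℕ} (u : Ed d × ℝ → ℝ) (p : Ed d × ℝ) : ℝ :=
  (∑ i : Fin d, pd2 u p (EuclideanSpace.single i 1, 0)) + pd2 u p (0, 1)

/-- The Dunkl Laplacian `Δ_κ` on `ℝ^{d+1}` (the Dunkl operators act in the `x`-variables). -/
def dunklLap {d : ℕ} (Rp : Finset (Ed d)) (κ : Ed d → ℝ) (u : Ed d × ℝ → ℝ)
    (p : Ed d × ℝ) : ℝ :=
  lapE u p + 2 * ∑ α ∈ Rp, κ α *
    (fderiv ℝ u p (α, 0) / ⟪α, p.1⟫ - (u p - u (reflAt α p.1, p.2)) / ⟪α, p.1⟫ ^ 2)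

/-- The open upper half-space `ℝ^{d+1}₊`. -/
def upperHS (d : ℕ) : Set (Ed d × ℝ) := {p | 0 < p.2}

/-- `u` is `κ`-harmonic on `Ω`: `u` is `C²` on `Ω` and `Δ_κ u = 0` at every point of `Ω`
whose `x`-coordinate is regular. -/
def KHarmonicOn {d : ℕ} (R Rp : Finset (Ed d)) (κ : Ed d → ℝ) (u : Ed d × ℝ → ℝ)
    (Ω : Set (Ed d × ℝ)) : Prop :=
  ContDiffOn ℝ 2 u Ω ∧ ∀ p ∈ Ω, isRegular R p.1 → dunklLap Rp κ u p = 0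

/-- The cone `Γ_a(x)` of aperture `a` with vertex `(x,0)`. -/
def cone {d : ℕ} (a : ℝ) (x : Ed d) : Set (Ed d × ℝ) :=
  {p | 0 < p.2 ∧ dist p.1 x < a * p.2}

/-- The truncated cone `Γ_a^h(x)`. -/
def coneT {d : ℕ} (a h : ℝ) (x : Ed d) : Set (Ed d × ℝ) :=
  {p | 0 < p.2 ∧ p.2 < h ∧ dist p.1 x < a * p.2}

/-- `u` has a finite non-tangential limit at `(x,0)`. -/
def HasNTLimit {d : ℕ} (u : Ed d × ℝ → ℝ) (x : Ed d) : Prop :=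
  ∀ a > (0 : ℝ), ∃ L : ℝ, Tendsto u (𝓝[cone a x] (x, (0 : ℝ))) (𝓝 L)

/-- `u` is non-tangentially bounded at `(x,0)`. -/
def NTBounded {d : ℕ} (u : Ed d × ℝ → ℝ) (x : Ed d) : Prop :=
  ∃ a > (0 : ℝ), ∃ h > (0 : ℝ), ∃ M : ℝ, ∀ p ∈ coneT a h x, |u p| ≤ M

/-- A subset of `ℝ^d` is `G`-invariant. -/
def GInvSet {d : ℕ} (R : Finset (Ed d)) (E : Set (Ed d)) : Prop :=
  ∀ σ ∈ dunklGroup R, σ '' E = E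

/-!
If `u` is positive somewhere, then for small `ε > 0` the function `w = u + ε y²` attains its maximum
over `closure Ω` at a point `q ∈ Ω` with `u q > 0`. Near `q` we have
`Δ_κ w = Δ_κ u + 2 ε ≥ 2 ε` at regular points. On the other hand `Δ_κ w` has a *nonpositive limit*
as regular points tend to `q`, even if `q` itself is not regular. Indeed second derivatives are
nonpositive at a maximum, and for each root `α` there are two cases. Off the mirror of `α` the root
term is continuous, its gradient part vanishes at `q`, and its difference part has the right sign
because `σ_α q ∈ Ω`. On the mirror, `σ_α p = p - ⟨α, p⟩ α` exhibits the root term as a second-order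
Taylor quotient with step `-⟨α, p⟩ → 0`, whose limit is half the second derivative in direction `α`.
-/

lemma exists_isMaxOn_add_mul {X : Type*} [TopologicalSpace X] {K : Set X} (hK : IsCompact K)
    {u f : X → ℝ} (hu : ContinuousOn u K) (hf : ContinuousOn f K) {x₀ : X} (hx₀ : x₀ ∈ K) {a : ℝ}
    (ha : a < u x₀) :
    ∃ ε > 0, ∃ q ∈ K, a < u q ∧ IsMaxOn (fun x => u x + ε * f x) K q := by
  obtain ⟨B, hB⟩ := hK.exists_bound_of_continuousOn hf
  have hB0 : 0 ≤ B := (norm_nonneg _).trans (hB x₀ hx₀)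
  have hgap : 0 < u x₀ - a := sub_pos.2 ha
  set ε : ℝ := (u x₀ - a) / (2 * B + 1) with hεdef
  have hε : 0 < ε := by positivity
  have hεB : ε * (2 * B) + ε = u x₀ - a := by
    rw [hεdef]
    field_simp
  obtain ⟨q, hqK, hq⟩ := hK.exists_isMaxOn ⟨x₀, hx₀⟩ (hu.add (hf.const_mul ε))
  refine ⟨ε, hε, q, hqK, ?_, hq⟩
  have hle : u x₀ + ε * f x₀ ≤ u q + ε * f q := hq hx₀
  have hosc : ε * (f q - f x₀) ≤ ε * (2 * B) := by
    gcongr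
    linarith [abs_le.1 (hB q hqK), abs_le.1 (hB x₀ hx₀)]
  linarith

/-! ### Second-order Taylor expansion -/

section Taylor

variable {E F : Type*} [NormedAddCommGroup E] [NormedSpace ℝ E] [NormedAddCommGroup F]
  [NormedSpace ℝ F] {f : E → F} {a : E}

lemma norm_taylor_two_sub_le {B : E →L[ℝ] E →L[ℝ] F} {x v : E} {C : ℝ}
    (hf : ∀ s ∈ Set.Icc (0 : ℝ) 1, DifferentiableAt ℝ f (x + s • v))
    (hC : ∀ s ∈ Set.Icc (0 : ℝ) 1,
      ‖fderiv ℝ f (x + s • v) - fderiv ℝ f x - B (s • v)‖ ≤ C) :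
    ‖f (x + v) - f x - fderiv ℝ f x v - (1 / 2 : ℝ) • B v v‖ ≤ C * ‖v‖ := by
  set g : ℝ → F := fun s => f (x + s • v) - s • fderiv ℝ f x v - (s ^ 2 / 2) • B v v with hg
  have hderiv : ∀ s ∈ Set.Icc (0 : ℝ) 1, HasDerivWithinAt g
      ((fderiv ℝ f (x + s • v) - fderiv ℝ f x - B (s • v)) v) (Set.Icc 0 1) s := by
    intro s hs
    have hline : HasDerivAt (fun s : ℝ => x + s • v) v s := by
      simpa using ((hasDerivAt_id s).smul_const v).const_add x
    have hquad : HasDerivAt (fun s : ℝ => (s ^ 2 / 2) • B v v) (s • B v v) s := by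
      simpa using ((hasDerivAt_pow 2 s).div_const 2).smul_const (B v v)
    have hlin : HasDerivAt (fun s : ℝ => s • fderiv ℝ f x v) (fderiv ℝ f x v) s := by
      simpa using (hasDerivAt_id s).smul_const (fderiv ℝ f x v)
    have hcomp := (hf s hs).hasFDerivAt.comp_hasDerivAt s hline
    simpa [hg, Function.comp_def] using ((hcomp.fun_sub hlin).fun_sub hquad).hasDerivWithinAt
  have hbound : ∀ s ∈ Set.Ico (0 : ℝ) 1,
      ‖(fderiv ℝ f (x + s • v) - fderiv ℝ f x - B (s • v)) v‖ ≤ C * ‖v‖ := fun s hs =>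
    ContinuousLinearMap.le_of_opNorm_le _ (hC s (Set.Ico_subset_Icc_self hs)) v
  have hincr := norm_image_sub_le_of_norm_deriv_le_segment_01' hderiv hbound
  have hg01 : g 1 - g 0 = f (x + v) - f x - fderiv ℝ f x v - (1 / 2 : ℝ) • B v v := by
    simp only [hg, one_smul, zero_smul, one_pow, zero_pow two_ne_zero, zero_div, add_zero, sub_zero]
    abel
  rwa [hg01] at hincr

/-- Strict differentiability of `fderiv ℝ f` at `a` is what makes the remainder uniform in the
base point. -/
lemma isLittleO_taylor_two (hf : ContDiffAt ℝ 2 f a) :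
    (fun p : E × E => f p.2 - f p.1 - fderiv ℝ f p.1 (p.2 - p.1)
      - (1 / 2 : ℝ) • fderiv ℝ (fderiv ℝ f) a (p.2 - p.1) (p.2 - p.1))
      =o[𝓝 (a, a)] fun p => ‖p.2 - p.1‖ ^ 2 := by
  have hf' : HasStrictFDerivAt (fderiv ℝ f) (fderiv ℝ (fderiv ℝ f) a) a :=
    (hf.fderiv_right (m := 1) (by norm_num)).hasStrictFDerivAt one_ne_zero
  have hdiff : ∀ᶠ z in 𝓝 a, DifferentiableAt ℝ f z :=
    (hf.eventually (by simp)).mono fun z hz => hz.differentiableAt two_ne_zero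
  refine Asymptotics.isLittleO_iff.2 fun ε hε => ?_
  obtain ⟨r, hr, hball⟩ := Metric.eventually_nhds_iff_ball.1
    ((continuous_fst.tendsto (a, a)).eventually hdiff |>.and (hf'.isLittleO.def hε))
  rw [← ball_prod_same] at hball
  filter_upwards [prod_mem_nhds (ball_mem_nhds a hr) (ball_mem_nhds a hr)] with ⟨x, y⟩ ⟨hx, hy⟩
  have hseg : ∀ s ∈ Set.Icc (0 : ℝ) 1, x + s • (y - x) ∈ ball a r := fun s hs =>
    (convex_ball a r).add_smul_sub_mem hx hy hs
  have hremainder := norm_taylor_two_sub_le (B := fderiv ℝ (fderiv ℝ f) a) (C := ε * ‖y - x‖)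
    (fun s hs => (hball (x + s • (y - x), x) ⟨hseg s hs, hx⟩).1) fun s hs => by
      have hstrict := (hball (x + s • (y - x), x) ⟨hseg s hs, hx⟩).2
      rw [add_sub_cancel_left] at hstrict
      refine hstrict.trans ?_
      rw [norm_smul, Real.norm_of_nonneg hs.1]
      gcongr
      exact mul_le_of_le_one_left (norm_nonneg _) hs.2
  simpa [pow_two, mul_assoc] using hremainder

lemma tendsto_taylor_two_quotient {ι : Type*} {l : Filter ι} {p : ι → E} {t : ι → ℝ}
    (hf : ContDiffAt ℝ 2 f a) (hp : Tendsto p l (𝓝 a)) (ht : Tendsto t l (𝓝[≠] 0)) (v : E) :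
    Tendsto (fun i => (t i ^ 2)⁻¹ • (f (p i + t i • v) - f (p i) - t i • fderiv ℝ f (p i) v)) l
      (𝓝 ((1 / 2 : ℝ) • fderiv ℝ (fderiv ℝ f) a v v)) := by
  obtain ⟨ht0, htne⟩ := tendsto_nhdsWithin_iff.1 ht
  have hpair : Tendsto (fun i => (p i, p i + t i • v)) l (𝓝 (a, a)) :=
    hp.prodMk_nhds (by simpa using hp.add (ht0.smul_const v))
  have hremainder : (fun i => f (p i + t i • v) - f (p i) - t i • fderiv ℝ f (p i) v
      - (t i ^ 2) • (1 / 2 : ℝ) • fderiv ℝ (fderiv ℝ f) a v v) =o[l] fun i => t i ^ 2 := by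
    refine (((isLittleO_taylor_two hf).comp_tendsto hpair).trans_isBigO
      (Asymptotics.IsBigO.of_bound (‖v‖ ^ 2) (Eventually.of_forall fun i => ?_))).congr_left
      fun i => ?_
    · simp [norm_smul, mul_pow, mul_comm]
    · simp only [Function.comp_apply, add_sub_cancel_left, map_smul, smul_apply, smul_smul]
      ring_nf
  refine (zero_add ((1 / 2 : ℝ) • fderiv ℝ (fderiv ℝ f) a v v) ▸
    hremainder.tendsto_inv_smul_nhds_zero.add_const _).congr' ?_
  filter_upwards [htne] with i hi
  rw [smul_sub, inv_smul_smul₀ (pow_ne_zero 2 hi), sub_add_cancel]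

lemma fderiv_fderiv_apply_nonpos_of_isLocalMax {f : E → ℝ} (hf : ContDiffAt ℝ 2 f a)
    (hmax : IsLocalMax f a) (v : E) : fderiv ℝ (fderiv ℝ f) a v v ≤ 0 := by
  have hlim := tendsto_taylor_two_quotient hf tendsto_const_nhds (tendsto_id (x := 𝓝[≠] (0 : ℝ))) v
  have hline : Tendsto (fun t : ℝ => a + t • v) (𝓝[≠] 0) (𝓝 a) := by
    have hcont : Continuous fun t : ℝ => a + t • v := by fun_prop
    simpa using (hcont.tendsto 0).mono_left nhdsWithin_le_nhds
  have hquot : ∀ᶠ t : ℝ in 𝓝[≠] 0,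
      (t ^ 2)⁻¹ • (f (a + t • v) - f a - t • fderiv ℝ f a v) ≤ 0 := by
    filter_upwards [hline.eventually hmax] with t ht
    rw [hmax.fderiv_eq_zero]
    simpa using mul_nonpos_of_nonneg_of_nonpos (inv_nonneg.2 (sq_nonneg t)) (sub_nonpos.2 ht)
  have hhalf := le_of_tendsto hlim hquot
  rw [smul_eq_mul] at hhalf
  linarith

lemma contDiffAt_fderiv_apply_const {m n : WithTop ℕ∞} (hf : ContDiffAt ℝ n f a)
    (hmn : m + 1 ≤ n) (v : E) : ContDiffAt ℝ m (fun x => fderiv ℝ f x v) a :=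
  (hf.fderiv_right hmn).clm_apply contDiffAt_const

lemma fderiv_fderiv_apply_const (hf : ContDiffAt ℝ 2 f a) (v : E) :
    fderiv ℝ (fun x => fderiv ℝ f x v) a v = fderiv ℝ (fderiv ℝ f) a v v := by
  have hf' : DifferentiableAt ℝ (fderiv ℝ f) a :=
    (hf.fderiv_right (m := 1) (by norm_num)).differentiableAt one_ne_zero
  rw [fderiv_clm_apply hf' (differentiableAt_const v)]
  simp

lemma fderiv_add_comp_snd_apply {u : E × ℝ → ℝ} {g : ℝ → ℝ} {p : E × ℝ}
    (hu : DifferentiableAt ℝ u p) (hg : DifferentiableAt ℝ g p.2) (v : E × ℝ) :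
    fderiv ℝ (fun q => u q + g q.2) p v = fderiv ℝ u p v + deriv g p.2 * v.2 := by
  have hcomp : HasFDerivAt (fun q : E × ℝ => g q.2)
      (deriv g p.2 • ContinuousLinearMap.snd ℝ E ℝ) p :=
    hg.hasDerivAt.comp_hasFDerivAt p hasFDerivAt_snd
  simp [(hu.hasFDerivAt.fun_add hcomp).fderiv]

end Taylor

/-! ### Regular points and reflections -/

lemma dense_setOf_inner_ne_zero {E : Type*} [NormedAddCommGroup E] [InnerProductSpace ℝ E]
    {α : E} (hα : α ≠ 0) : Dense {x : E | ⟪α, x⟫ ≠ 0} := by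
  have hker : (innerSL ℝ α).ker ≠ ⊤ := fun h =>
    hα (inner_self_eq_zero.1 (show α ∈ (innerSL ℝ α).ker from h ▸ Submodule.mem_top))
  refine interior_eq_empty_iff_dense_compl.1 (Set.not_nonempty_iff_eq_empty.1 fun hint => ?_)
  exact hker (Submodule.eq_top_of_nonempty_interior' (innerSL ℝ α).ker hint)

section Dunkl

variable {d : ℕ} {R A : Finset (Ed d)} {κ : Ed d → ℝ} {α : Ed d} {u w : Ed d × ℝ → ℝ}
  {p q : Ed d × ℝ}

lemma dense_setOf_isRegular_fst (hR : ∀ α ∈ R, α ≠ 0) :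
    Dense {p : Ed d × ℝ | isRegular R p.1} := by
  have hdense : Dense (⋂ α ∈ (R : Set (Ed d)), {x : Ed d | ⟪α, x⟫ ≠ 0}) :=
    dense_biInter_of_isOpen (fun α _ => isOpen_ne_fun (by fun_prop) continuous_const)
      R.countable_toSet fun α hα => dense_setOf_inner_ne_zero (hR α hα)
  convert hdense.preimage (isOpenMap_fst (X := Ed d) (Y := ℝ)) using 1
  ext p
  simp [isRegular]

lemma IsRootSystem.isRegular_of_isRegular_pos {Rp : Finset (Ed d)} (h : IsRootSystem R Rp κ)
    {x : Ed d} (hx : isRegular Rp x) : isRegular R x := by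
  intro α hα
  rcases h.pos_split α hα with ⟨hpos, -⟩ | ⟨-, hneg⟩
  · exact hx α hpos
  · simpa [inner_neg_left] using hx (-α) hneg

/-- The reflection `σ_α` acting on `ℝ^{d+1}` through the `x`-variables. -/
def reflPt (α : Ed d) (p : Ed d × ℝ) : Ed d × ℝ := (reflAt α p.1, p.2)

lemma continuous_reflPt (α : Ed d) : Continuous (reflPt α) := by
  unfold reflPt reflAt
  fun_prop

lemma reflPt_eq_add_smul (α : Ed d) (p : Ed d × ℝ) :
    reflPt α p = p + (-⟪α, p.1⟫) • ((α, 0) : Ed d × ℝ) := by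
  ext <;> simp [reflPt, reflAt, sub_eq_add_neg]

lemma mapsTo_reflPt_of_dunklGroup_invariant {Ω : Set (Ed d × ℝ)}
    (hΩ : ∀ σ ∈ dunklGroup R, (fun p : Ed d × ℝ => (σ p.1, p.2)) '' Ω = Ω) (hα : α ∈ R) :
    Set.MapsTo (reflPt α) Ω Ω :=
  Set.mapsTo_iff_image_subset.2 (hΩ (reflAt α) (Submonoid.subset_closure ⟨α, hα, rfl⟩)).subset

/-! ### The Laplacian and the root terms -/

lemma pd2_eq_fderiv_fderiv (hw : ContDiffAt ℝ 2 w p) (v : Ed d × ℝ) :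
    pd2 w p v = fderiv ℝ (fderiv ℝ w) p v v :=
  fderiv_fderiv_apply_const hw v

lemma continuousAt_pd2 (hw : ContDiffAt ℝ 2 w q) (v : Ed d × ℝ) :
    ContinuousAt (fun p => pd2 w p v) q :=
  ((contDiffAt_fderiv_apply_const hw (m := 1) (by norm_num) v).continuousAt_fderiv
    one_ne_zero).clm_apply continuousAt_const

lemma pd2_nonpos_of_isLocalMax (hw : ContDiffAt ℝ 2 w q) (hmax : IsLocalMax w q)
    (v : Ed d × ℝ) : pd2 w q v ≤ 0 :=
  pd2_eq_fderiv_fderiv hw v ▸ fderiv_fderiv_apply_nonpos_of_isLocalMax hw hmax v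

lemma continuousAt_lapE (hw : ContDiffAt ℝ 2 w q) : ContinuousAt (lapE w) q :=
  (tendsto_finsetSum _ fun _ _ => continuousAt_pd2 hw _).add (continuousAt_pd2 hw _)

lemma lapE_nonpos_of_isLocalMax (hw : ContDiffAt ℝ 2 w q) (hmax : IsLocalMax w q) :
    lapE w q ≤ 0 :=
  add_nonpos (Finset.sum_nonpos fun _ _ => pd2_nonpos_of_isLocalMax hw hmax _)
    (pd2_nonpos_of_isLocalMax hw hmax _)

/-- The contribution of the root `α`, without its factor `2 κ(α)`, to the Dunkl Laplacian. On the
mirror `⟨α, x⟩ = 0` the divisions make it the junk value `0`. -/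
def rootTerm (w : Ed d × ℝ → ℝ) (α : Ed d) (p : Ed d × ℝ) : ℝ :=
  fderiv ℝ w p (α, 0) / ⟪α, p.1⟫ - (w p - w (reflPt α p)) / ⟪α, p.1⟫ ^ 2

lemma dunklLap_eq_lapE_add_sum_rootTerm (A : Finset (Ed d)) (κ : Ed d → ℝ)
    (w : Ed d × ℝ → ℝ) (p : Ed d × ℝ) :
    dunklLap A κ w p = lapE w p + 2 * ∑ α ∈ A, κ α * rootTerm w α p := rfl

lemma continuousAt_rootTerm (hw : ContDiffAt ℝ 1 w q) (hwσ : ContinuousAt w (reflPt α q))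
    (hα : ⟪α, q.1⟫ ≠ 0) : ContinuousAt (rootTerm w α) q := by
  have hinner : ContinuousAt (fun p : Ed d × ℝ => ⟪α, p.1⟫) q := by fun_prop
  have hgrad : ContinuousAt (fun p => fderiv ℝ w p (α, 0)) q :=
    (contDiffAt_fderiv_apply_const hw (m := 0) (by norm_num) _).continuousAt
  have hrefl : ContinuousAt (fun p => w (reflPt α p)) q :=
    ContinuousAt.comp (f := reflPt α) hwσ (continuous_reflPt α).continuousAt
  exact (hgrad.div hinner hα).sub
    ((hw.continuousAt.sub hrefl).div (hinner.pow 2) (pow_ne_zero 2 hα))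

lemma rootTerm_eq_taylor_two_quotient (hα : ⟪α, p.1⟫ ≠ 0) :
    rootTerm w α p = ((-⟪α, p.1⟫) ^ 2)⁻¹ • (w (p + (-⟪α, p.1⟫) • ((α, 0) : Ed d × ℝ)) - w p
      - (-⟪α, p.1⟫) • fderiv ℝ w p (α, 0)) := by
  rw [rootTerm, reflPt_eq_add_smul]
  simp only [smul_eq_mul]
  field_simp
  ring

lemma tendsto_rootTerm_of_inner_eq_zero (hw : ContDiffAt ℝ 2 w q) (hα : ⟪α, q.1⟫ = 0) :
    Tendsto (rootTerm w α) (𝓝[{p | ⟪α, p.1⟫ ≠ 0}] q) (𝓝 (pd2 w q (α, 0) / 2)) := by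
  have hstep : Tendsto (fun p : Ed d × ℝ => -⟪α, p.1⟫) (𝓝[{p | ⟪α, p.1⟫ ≠ 0}] q) (𝓝[≠] 0) := by
    have hcont : Continuous fun p : Ed d × ℝ => -⟪α, p.1⟫ := by fun_prop
    refine tendsto_nhdsWithin_iff.2 ⟨?_, ?_⟩
    · simpa [hα] using (hcont.tendsto q).mono_left nhdsWithin_le_nhds
    · filter_upwards [self_mem_nhdsWithin] with p hp using neg_ne_zero.2 hp
  have hlim := tendsto_taylor_two_quotient hw (tendsto_id.mono_left nhdsWithin_le_nhds) hstep (α, 0)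
  rw [← pd2_eq_fderiv_fderiv hw, smul_eq_mul, one_div_mul_eq_div] at hlim
  refine hlim.congr' ?_
  filter_upwards [self_mem_nhdsWithin] with p hp using (rootTerm_eq_taylor_two_quotient hp).symm

lemma exists_tendsto_rootTerm_nonpos_of_isLocalMax (hw : ContDiffAt ℝ 2 w q)
    (hmax : IsLocalMax w q) (hle : w (reflPt α q) ≤ w q) (hwσ : ContinuousAt w (reflPt α q)) :
    ∃ L ≤ 0, Tendsto (rootTerm w α) (𝓝[{p | ⟪α, p.1⟫ ≠ 0}] q) (𝓝 L) := by
  by_cases hα : ⟪α, q.1⟫ = 0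
  · exact ⟨_, div_nonpos_of_nonpos_of_nonneg (pd2_nonpos_of_isLocalMax hw hmax _) zero_le_two,
      tendsto_rootTerm_of_inner_eq_zero hw hα⟩
  · refine ⟨rootTerm w α q, ?_, (continuousAt_rootTerm (hw.of_le one_le_two) hwσ hα).mono_left
      nhdsWithin_le_nhds⟩
    have hquot : 0 ≤ (w q - w (reflPt α q)) / ⟪α, q.1⟫ ^ 2 :=
      div_nonneg (sub_nonneg.2 hle) (sq_nonneg _)
    simpa [rootTerm, hmax.fderiv_eq_zero] using hquot

lemma exists_tendsto_dunklLap_nonpos_of_isLocalMax (hκ : ∀ α ∈ A, 0 ≤ κ α)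
    (hw : ContDiffAt ℝ 2 w q) (hmax : IsLocalMax w q) (hle : ∀ α ∈ A, w (reflPt α q) ≤ w q)
    (hwσ : ∀ α ∈ A, ContinuousAt w (reflPt α q)) :
    ∃ L ≤ 0, Tendsto (dunklLap A κ w) (𝓝[{p | isRegular A p.1}] q) (𝓝 L) := by
  choose! L hL hlim using fun α hα =>
    exists_tendsto_rootTerm_nonpos_of_isLocalMax hw hmax (hle α hα) (hwσ α hα)
  refine ⟨lapE w q + 2 * ∑ α ∈ A, κ α * L α, ?_, ?_⟩
  · exact add_nonpos (lapE_nonpos_of_isLocalMax hw hmax) <|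
      mul_nonpos_of_nonneg_of_nonpos zero_le_two <| Finset.sum_nonpos fun α hα =>
        mul_nonpos_of_nonneg_of_nonpos (hκ α hα) (hL α hα)
  · have hroot : ∀ α ∈ A, Tendsto (rootTerm w α) (𝓝[{p | isRegular A p.1}] q) (𝓝 (L α)) :=
      fun α hα => (hlim α hα).mono_left (nhdsWithin_mono q fun p hp => hp α hα)
    exact ((continuousAt_lapE hw).mono_left nhdsWithin_le_nhds).add
      ((tendsto_finsetSum A fun α hα => (hroot α hα).const_mul (κ α)).const_mul 2)

/-! ### The perturbation by a function of `y` -/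

lemma pd2_add_comp_snd {g : ℝ → ℝ} (hu : ContDiffAt ℝ 2 u p) (hg : ContDiffAt ℝ 2 g p.2)
    (v : Ed d × ℝ) :
    pd2 (fun q => u q + g q.2) p v = pd2 u p v + deriv (deriv g) p.2 * v.2 ^ 2 := by
  have hgrad : (fun q => fderiv ℝ (fun q => u q + g q.2) q v)
      =ᶠ[𝓝 p] fun q => fderiv ℝ u q v + deriv g q.2 * v.2 := by
    filter_upwards [hu.eventually (by simp),
      (continuous_snd.tendsto p).eventually (hg.eventually (by simp))] with q huq hgq
    exact fderiv_add_comp_snd_apply (huq.differentiableAt two_ne_zero)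
      (hgq.differentiableAt two_ne_zero) v
  have hu' : DifferentiableAt ℝ (fun q => fderiv ℝ u q v) p :=
    (contDiffAt_fderiv_apply_const hu (m := 1) (by norm_num) v).differentiableAt one_ne_zero
  have hg' : DifferentiableAt ℝ (deriv g) p.2 :=
    (contDiffAt_fderiv_apply_const hg (m := 1) (by norm_num) 1).differentiableAt one_ne_zero
  rw [pd2, hgrad.fderiv_eq, fderiv_add_comp_snd_apply hu' (hg'.mul_const v.2),
    deriv_mul_const hg', pd2]
  ring

lemma rootTerm_add_comp_snd {g : ℝ → ℝ} (hu : DifferentiableAt ℝ u p)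
    (hg : DifferentiableAt ℝ g p.2) (α : Ed d) :
    rootTerm (fun q => u q + g q.2) α p = rootTerm u α p := by
  rw [rootTerm, fderiv_add_comp_snd_apply hu hg]
  simp [rootTerm, reflPt]

lemma dunklLap_add_comp_snd {g : ℝ → ℝ} (A : Finset (Ed d)) (κ : Ed d → ℝ)
    (hu : ContDiffAt ℝ 2 u p) (hg : ContDiffAt ℝ 2 g p.2) :
    dunklLap A κ (fun q => u q + g q.2) p = dunklLap A κ u p + deriv (deriv g) p.2 := by
  have hroot : ∀ α, rootTerm (fun q => u q + g q.2) α p = rootTerm u α p :=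
    rootTerm_add_comp_snd (hu.differentiableAt two_ne_zero) (hg.differentiableAt two_ne_zero)
  have hlap : lapE (fun q => u q + g q.2) p = lapE u p + deriv (deriv g) p.2 := by
    simp [lapE, pd2_add_comp_snd hu hg, add_assoc]
  simp only [dunklLap_eq_lapE_add_sum_rootTerm, hroot, hlap]
  ring

lemma dunklLap_add_const_mul_sq (A : Finset (Ed d)) (κ : Ed d → ℝ) (hu : ContDiffAt ℝ 2 u p)
    (ε : ℝ) : dunklLap A κ (fun q => u q + ε * q.2 ^ 2) p = dunklLap A κ u p + 2 * ε := by
  have hderiv : deriv (deriv fun y : ℝ => ε * y ^ 2) p.2 = 2 * ε := by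
    simp [mul_comm]
  rw [← hderiv]
  exact dunklLap_add_comp_snd (g := fun y => ε * y ^ 2) A κ hu (by fun_prop)

end Dunkl

theorem dunkl_maximum_principle_general {d : ℕ} {A : Finset (Ed d)} {κ : Ed d → ℝ}
    (hA : ∀ α ∈ A, α ≠ 0) (hκ : ∀ α ∈ A, 0 ≤ κ α) {Ω : Set (Ed d × ℝ)} (hΩo : IsOpen Ω)
    (hΩbdd : Bornology.IsBounded Ω) (hΩA : ∀ α ∈ A, Set.MapsTo (reflPt α) Ω Ω)
    {u : Ed d × ℝ → ℝ} (hucont : ContinuousOn u (closure Ω))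
    (huC2 : ContDiffOn ℝ 2 u {p ∈ Ω | 0 < u p})
    (husub : ∀ p ∈ Ω, 0 < u p → isRegular A p.1 → 0 ≤ dunklLap A κ u p)
    (hbd : ∀ p ∈ frontier Ω, u p ≤ 0) :
    ∀ p ∈ Ω, u p ≤ 0 := by
  by_contra! hpos
  obtain ⟨p₀, hp₀, hup₀⟩ := hpos
  obtain ⟨ε, hε, q, hqcl, huq, hmax⟩ := exists_isMaxOn_add_mul hΩbdd.isCompact_closure hucont
    (f := fun p => p.2 ^ 2) (by fun_prop) (subset_closure hp₀) hup₀
  set w : Ed d × ℝ → ℝ := fun p => u p + ε * p.2 ^ 2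
  have hwcont : ContinuousOn w (closure Ω) := hucont.add (by fun_prop)
  have hqΩ : q ∈ Ω := by
    by_contra hq
    exact (hbd q (hΩo.frontier_eq ▸ ⟨hqcl, hq⟩)).not_gt huq
  have hU : {p ∈ Ω | 0 < u p} ∈ 𝓝 q :=
    ((hucont.mono subset_closure).isOpen_inter_preimage hΩo isOpen_Ioi).mem_nhds ⟨hqΩ, huq⟩
  have hσq : ∀ α ∈ A, closure Ω ∈ 𝓝 (reflPt α q) := fun α hα =>
    mem_of_superset (hΩo.mem_nhds (hΩA α hα hqΩ)) subset_closure
  obtain ⟨L, hL, hlim⟩ := exists_tendsto_dunklLap_nonpos_of_isLocalMax (w := w) hκ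
    ((huC2.contDiffAt hU).add (by fun_prop))
    (hmax.isLocalMax (mem_of_superset (hΩo.mem_nhds hqΩ) subset_closure))
    (fun α hα => hmax (mem_of_mem_nhds (hσq α hα)))
    (fun α hα => hwcont.continuousAt (hσq α hα))
  have hlower : ∀ᶠ p in 𝓝[{p | isRegular A p.1}] q, 2 * ε ≤ dunklLap A κ w p := by
    filter_upwards [self_mem_nhdsWithin, nhdsWithin_le_nhds (eventually_mem_nhds_iff.2 hU)]
      with p hreg hpU
    obtain ⟨hpΩ, hup⟩ := mem_of_mem_nhds hpU
    rw [dunklLap_add_const_mul_sq A κ (huC2.contDiffAt hpU)]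
    linarith [husub p hpΩ hup hreg]
  have : (𝓝[{p : Ed d × ℝ | isRegular A p.1}] q).NeBot :=
    mem_closure_iff_nhdsWithin_neBot.1 (dense_setOf_isRegular_fst hA q)
  linarith [ge_of_tendsto hlim hlower]

/-- **Lemma 4.3 (maximum principle).** Let `Ω` be a `G`-invariant bounded domain in
`ℝ^{d+1}` and `u` continuous on `closure Ω`, `C²` on the region of `Ω` where `u > 0` with
`Δ_κ u ≥ 0` there (at points with regular `x`-coordinate). If `u ≤ 0` on `∂Ω` then
`u ≤ 0` on `Ω`. -/
theorem dunkl_maximum_principle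
    {d : ℕ} (hd : 1 ≤ d) (R Rp : Finset (Ed d)) (κ : Ed d → ℝ)
    (hRS : IsRootSystem R Rp κ)
    (Ω : Set (Ed d × ℝ)) (hΩo : IsOpen Ω) (hΩconn : IsConnected Ω)
    (hΩbdd : Bornology.IsBounded Ω)
    (hΩinv : ∀ σ ∈ dunklGroup R, (fun p : Ed d × ℝ => (σ p.1, p.2)) '' Ω = Ω)
    (u : Ed d × ℝ → ℝ) (hucont : ContinuousOn u (closure Ω))
    (huC2 : ContDiffOn ℝ 2 u {p ∈ Ω | 0 < u p})
    (husub : ∀ p ∈ Ω, 0 < u p → isRegular R p.1 → 0 ≤ dunklLap Rp κ u p)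
    (hbd : ∀ p ∈ frontier Ω, u p ≤ 0) :
    ∀ p ∈ Ω, u p ≤ 0 := by
  exact dunkl_maximum_principle_general (fun α hα => hRS.nonzero α (hRS.pos_sub hα))
    (fun α hα => hRS.kappa_nonneg α (hRS.pos_sub hα)) hΩo hΩbdd
    (fun α hα => mapsTo_reflPt_of_dunklGroup_invariant hΩinv (hRS.pos_sub hα)) hucont huC2
    (fun p hp hup hreg => husub p hp hup (hRS.isRegular_of_isRegular_pos hreg)) hbd

end
end

section
/- Let u_1,…,u_m be κ-harmonic functions in ℝ^{d+1}₊, let F = (u_1,…,u_m) and |F| = (∑_{j=1}^m u_j²)^{1/2}. Then Δ_κ|F| ≥ 0 at every point (x,y) ∈ ℝ^{d+1}₊ with x regular at which |F(x,y)| > 0. -/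
/-!
Fix `p` with `|F(p)| > 0` and put `e = F(p) / |F(p)|`. The function `g = ⟨e, F⟩` is a linear
combination of the `u_j`, hence `κ`-harmonic, and by Cauchy–Schwarz `g ≤ |F|` everywhere, with
equality at `p`. So `|F| - g` attains its minimum at `p`: there the gradient vanishes, the second
derivatives are nonnegative and, since `κ ≥ 0`, so is the contribution of each reflection. Hence
`Δ_κ|F|(p) ≥ Δ_κ g(p) = 0`.
-/

open MeasureTheory Filter Metric
open scoped RealInnerProductSpace Topology

noncomputable section

section SecondDerivative

lemma deriv_deriv_nonneg_of_isLocalMin {φ : ℝ → ℝ} {t : ℝ} (hmin : IsLocalMin φ t)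
    (hc : ContinuousAt φ t) : 0 ≤ deriv (deriv φ) t := by
  by_contra! hneg
  -- By the second derivative test `t` is also a local maximum, so `φ` is constant near `t`.
  have hmax : IsLocalMax φ t := isLocalMax_of_deriv_deriv_neg hneg hmin.deriv_eq_zero hc
  have hconst : φ =ᶠ[𝓝 t] fun _ => φ t := by
    filter_upwards [hmin, hmax] with s hs₁ hs₂ using le_antisymm hs₂ hs₁
  have hzero : deriv (deriv φ) t = 0 := by simp [hconst.deriv.deriv_eq]
  exact hneg.ne hzero

variable {E F : Type*} [NormedAddCommGroup E] [NormedSpace ℝ E]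
  [NormedAddCommGroup F] [NormedSpace ℝ F]

lemma differentiableAt_fderiv_apply_of_contDiffAt {f : E → F} {p : E} (hf : ContDiffAt ℝ 2 f p)
    (v : E) : DifferentiableAt ℝ (fun q => fderiv ℝ f q v) p :=
  ((hf.fderiv_right (m := 1) (by norm_num)).differentiableAt (by norm_num)).clm_apply
    (differentiableAt_const v)

lemma eventually_differentiableAt_of_contDiffAt {f : E → F} {p : E} (hf : ContDiffAt ℝ 1 f p) :
    ∀ᶠ q in 𝓝 p, DifferentiableAt ℝ f q :=
  (hf.eventually (by simp)).mono fun _ hq => hq.differentiableAt one_ne_zero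

lemma hasDerivAt_add_smul (p v : E) (t : ℝ) : HasDerivAt (fun s : ℝ => p + s • v) v t := by
  simpa only [id, one_smul] using ((hasDerivAt_id t).smul_const v).const_add p

lemma tendsto_add_smul_zero (p v : E) : Tendsto (fun s : ℝ => p + s • v) (𝓝 0) (𝓝 p) := by
  simpa only [ContinuousAt, zero_smul, add_zero] using (hasDerivAt_add_smul p v 0).continuousAt

lemma deriv_comp_add_smul {f : E → F} {p v : E} {t : ℝ}
    (hf : DifferentiableAt ℝ f (p + t • v)) :
    deriv (fun s : ℝ => f (p + s • v)) t = fderiv ℝ f (p + t • v) v :=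
  (hf.hasFDerivAt.comp_hasDerivAt t (hasDerivAt_add_smul p v t)).deriv

lemma deriv_deriv_comp_add_smul_zero {f : E → F} {p : E} (hf : ContDiffAt ℝ 2 f p) (v : E) :
    deriv (deriv fun s : ℝ => f (p + s • v)) 0 = fderiv ℝ (fun q => fderiv ℝ f q v) p v := by
  have hp : p + (0 : ℝ) • v = p := by rw [zero_smul, add_zero]
  have hfirst : deriv (fun s : ℝ => f (p + s • v)) =ᶠ[𝓝 0]
      fun s => fderiv ℝ f (p + s • v) v :=
    ((tendsto_add_smul_zero p v).eventually
      (eventually_differentiableAt_of_contDiffAt (hf.of_le one_le_two))).mono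
      fun _ => deriv_comp_add_smul
  have hdiff : DifferentiableAt ℝ (fun q => fderiv ℝ f q v) (p + (0 : ℝ) • v) :=
    hp.symm ▸ differentiableAt_fderiv_apply_of_contDiffAt hf v
  rw [hfirst.deriv_eq, deriv_comp_add_smul hdiff, hp]

lemma fderiv_fderiv_apply_nonneg_of_isLocalMin {f : E → ℝ} {p : E} (hf : ContDiffAt ℝ 2 f p)
    (hmin : IsLocalMin f p) (v : E) : 0 ≤ fderiv ℝ (fun q => fderiv ℝ f q v) p v := by
  have hline := tendsto_add_smul_zero p v
  rw [← deriv_deriv_comp_add_smul_zero hf v]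
  apply deriv_deriv_nonneg_of_isLocalMin
  · simpa only [IsLocalMin, IsMinFilter, zero_smul, add_zero] using hline.eventually hmin
  · rw [ContinuousAt, zero_smul, add_zero]
    exact hf.continuousAt.tendsto.comp hline

end SecondDerivative

lemma sum_div_sqrt_mul_le_sqrt {ι : Type*} (s : Finset ι) (x y : ι → ℝ) :
    ∑ i ∈ s, x i / √(∑ k ∈ s, x k ^ 2) * y i ≤ √(∑ i ∈ s, y i ^ 2) := by
  simp only [div_mul_eq_mul_div, ← Finset.sum_div]
  refine div_le_of_le_mul₀ (Real.sqrt_nonneg _) (Real.sqrt_nonneg _) ?_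
  rw [mul_comm]
  exact Real.sum_mul_le_sqrt_mul_sqrt s x y

lemma sum_div_sqrt_mul_self {ι : Type*} (s : Finset ι) (x : ι → ℝ) :
    ∑ i ∈ s, x i / √(∑ k ∈ s, x k ^ 2) * x i = √(∑ i ∈ s, x i ^ 2) := by
  simp only [div_mul_eq_mul_div, ← Finset.sum_div, ← sq, Real.div_sqrt]

lemma isOpen_upperHS (d : ℕ) : IsOpen (upperHS d) :=
  isOpen_lt continuous_const continuous_snd

section DunklLaplacian

variable {d : ℕ} {R Rp : Finset (Ed d)} {κ : Ed d → ℝ} {f g : Ed d × ℝ → ℝ} {p : Ed d × ℝ}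

lemma pd2_add (hf : ContDiffAt ℝ 2 f p) (hg : ContDiffAt ℝ 2 g p) (v : Ed d × ℝ) :
    pd2 (f + g) p v = pd2 f p v + pd2 g p v := by
  have hfirst : (fun q => fderiv ℝ (f + g) q v) =ᶠ[𝓝 p]
      (fun q => fderiv ℝ f q v) + fun q => fderiv ℝ g q v := by
    filter_upwards [eventually_differentiableAt_of_contDiffAt (hf.of_le one_le_two),
      eventually_differentiableAt_of_contDiffAt (hg.of_le one_le_two)] with q hfq hgq
    simp only [fderiv_add hfq hgq, Pi.add_apply, _root_.add_apply]
  rw [pd2, hfirst.fderiv_eq, fderiv_add (differentiableAt_fderiv_apply_of_contDiffAt hf v)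
    (differentiableAt_fderiv_apply_of_contDiffAt hg v), _root_.add_apply, pd2, pd2]

lemma pd2_const_smul (c : ℝ) (f : Ed d × ℝ → ℝ) (p v : Ed d × ℝ) :
    pd2 (c • f) p v = c * pd2 f p v := by
  have hfirst : (fun q => fderiv ℝ (c • f) q v) = c • fun q => fderiv ℝ f q v := by
    rw [fderiv_const_smul_field]
    rfl
  rw [pd2, hfirst, fderiv_const_smul_field]
  rfl

lemma lapE_add (hf : ContDiffAt ℝ 2 f p) (hg : ContDiffAt ℝ 2 g p) :
    lapE (f + g) p = lapE f p + lapE g p := by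
  simp only [lapE, pd2_add hf hg, Finset.sum_add_distrib]
  ring

lemma lapE_const_smul (c : ℝ) (f : Ed d × ℝ → ℝ) (p : Ed d × ℝ) :
    lapE (c • f) p = c * lapE f p := by
  simp only [lapE, pd2_const_smul, ← Finset.mul_sum, mul_add]

lemma dunklLap_add (hf : ContDiffAt ℝ 2 f p) (hg : ContDiffAt ℝ 2 g p) :
    dunklLap Rp κ (f + g) p = dunklLap Rp κ f p + dunklLap Rp κ g p := by
  have hfderiv : fderiv ℝ (f + g) p = fderiv ℝ f p + fderiv ℝ g p :=
    fderiv_add (hf.differentiableAt (by norm_num)) (hg.differentiableAt (by norm_num))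
  simp only [dunklLap, lapE_add hf hg, hfderiv, _root_.add_apply, Pi.add_apply]
  rw [add_add_add_comm, ← mul_add, ← Finset.sum_add_distrib]
  congr 3 with α
  ring

lemma dunklLap_const_smul (c : ℝ) (f : Ed d × ℝ → ℝ) (p : Ed d × ℝ) :
    dunklLap Rp κ (c • f) p = c * dunklLap Rp κ f p := by
  simp only [dunklLap, lapE_const_smul, fderiv_const_smul_field, _root_.smul_apply, Pi.smul_apply,
    smul_eq_mul]
  rw [mul_add, mul_left_comm c 2, Finset.mul_sum _ _ c]
  congr 3 with α
  ring

lemma lapE_nonneg_of_isLocalMin (hf : ContDiffAt ℝ 2 f p) (hmin : IsLocalMin f p) :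
    0 ≤ lapE f p :=
  add_nonneg (Finset.sum_nonneg fun _ _ => fderiv_fderiv_apply_nonneg_of_isLocalMin hf hmin _)
    (fderiv_fderiv_apply_nonneg_of_isLocalMin hf hmin _)

lemma dunklLap_nonneg_of_isLocalMin (hκ : ∀ α ∈ Rp, 0 ≤ κ α) (hf : ContDiffAt ℝ 2 f p)
    (hmin : IsLocalMin f p) (hrefl : ∀ α ∈ Rp, f p ≤ f (reflAt α p.1, p.2)) :
    0 ≤ dunklLap Rp κ f p := by
  refine add_nonneg (lapE_nonneg_of_isLocalMin hf hmin)
    (mul_nonneg zero_le_two (Finset.sum_nonneg fun α hα => mul_nonneg (hκ α hα) ?_))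
  have hjump : f p - f (reflAt α p.1, p.2) ≤ 0 := sub_nonpos.2 (hrefl α hα)
  simpa only [hmin.fderiv_eq_zero, _root_.zero_apply, zero_div, zero_sub, neg_nonneg]
    using div_nonpos_of_nonpos_of_nonneg hjump (sq_nonneg _)

lemma dunklLap_le_dunklLap_of_le_of_eq (hκ : ∀ α ∈ Rp, 0 ≤ κ α) (hf : ContDiffAt ℝ 2 f p)
    (hg : ContDiffAt ℝ 2 g p) (hle : f ≤ g) (heq : f p = g p) :
    dunklLap Rp κ f p ≤ dunklLap Rp κ g p := by
  have hmin (q : Ed d × ℝ) : (g - f) p ≤ (g - f) q := by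
    simpa only [Pi.sub_apply, heq, sub_self, sub_nonneg] using hle q
  have hnonneg : 0 ≤ dunklLap Rp κ (g - f) p :=
    dunklLap_nonneg_of_isLocalMin hκ (hg.sub hf) (.of_forall hmin) fun _ _ => hmin _
  calc dunklLap Rp κ f p
      ≤ dunklLap Rp κ f p + dunklLap Rp κ (g - f) p := le_add_of_nonneg_right hnonneg
    _ = dunklLap Rp κ (f + (g - f)) p := (dunklLap_add hf (hg.sub hf)).symm
    _ = dunklLap Rp κ g p := by rw [add_sub_cancel]

namespace KHarmonicOn

variable {Ω : Set (Ed d × ℝ)}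

lemma contDiffAt (hf : KHarmonicOn R Rp κ f Ω) (hΩ : IsOpen Ω) (hp : p ∈ Ω) :
    ContDiffAt ℝ 2 f p :=
  hf.1.contDiffAt (hΩ.mem_nhds hp)

lemma add (hΩ : IsOpen Ω) (hf : KHarmonicOn R Rp κ f Ω) (hg : KHarmonicOn R Rp κ g Ω) :
    KHarmonicOn R Rp κ (f + g) Ω := by
  refine ⟨hf.1.add hg.1, fun p hp hreg => ?_⟩
  rw [dunklLap_add (hf.contDiffAt hΩ hp) (hg.contDiffAt hΩ hp), hf.2 p hp hreg, hg.2 p hp hreg,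
    add_zero]

lemma const_smul (hf : KHarmonicOn R Rp κ f Ω) (c : ℝ) : KHarmonicOn R Rp κ (c • f) Ω := by
  refine ⟨contDiffOn_const.smul hf.1, fun p hp hreg => ?_⟩
  rw [dunklLap_const_smul, hf.2 p hp hreg, mul_zero]

lemma zero : KHarmonicOn R Rp κ 0 Ω := by
  refine ⟨contDiffOn_const, fun p _ _ => ?_⟩
  rw [← zero_smul ℝ (0 : Ed d × ℝ → ℝ), dunklLap_const_smul, zero_mul]

lemma sum {ι : Type*} (hΩ : IsOpen Ω) {s : Finset ι} {u : ι → Ed d × ℝ → ℝ}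
    (hu : ∀ j ∈ s, KHarmonicOn R Rp κ (u j) Ω) : KHarmonicOn R Rp κ (∑ j ∈ s, u j) Ω :=
  Finset.sum_induction u (KHarmonicOn R Rp κ · Ω) (fun _ _ => add hΩ) zero hu

end KHarmonicOn

theorem dunkl_subharmonicity_of_norm_general {ι : Type*} [Fintype ι] {Ω : Set (Ed d × ℝ)}
    {u : ι → Ed d × ℝ → ℝ} (hsub : Rp ⊆ R) (hκ : ∀ α ∈ R, 0 ≤ κ α) (hΩ : IsOpen Ω)
    (hu : ∀ j, KHarmonicOn R Rp κ (u j) Ω) (hp : p ∈ Ω) (hreg : isRegular R p.1)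
    (hpos : 0 < √(∑ j, u j p ^ 2)) :
    0 ≤ dunklLap Rp κ (fun q => √(∑ j, u j q ^ 2)) p := by
  set g : Ed d × ℝ → ℝ := ∑ j, (u j p / √(∑ k, u k p ^ 2)) • u j with hg
  have hharm : KHarmonicOn R Rp κ g Ω := .sum hΩ fun j _ => (hu j).const_smul _
  have hnorm : ContDiffAt ℝ 2 (fun q => √(∑ j, u j q ^ 2)) p :=
    (ContDiffAt.sum fun j _ => ((hu j).contDiffAt hΩ hp).pow 2).sqrt (Real.sqrt_pos.1 hpos).ne'
  have hle : g ≤ fun q => √(∑ j, u j q ^ 2) := fun q => by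
    simpa [hg] using sum_div_sqrt_mul_le_sqrt Finset.univ (u · p) (u · q)
  have heq : g p = √(∑ j, u j p ^ 2) := by
    simpa [hg] using sum_div_sqrt_mul_self Finset.univ (u · p)
  rw [← hharm.2 p hp hreg]
  exact dunklLap_le_dunklLap_of_le_of_eq (fun α hα => hκ α (hsub hα)) (hharm.contDiffAt hΩ hp)
    hnorm hle heq

end DunklLaplacian

/-- **Proposition 4.4.** If `u_1, …, u_m` are `κ`-harmonic in `ℝ^{d+1}₊` and
`|F| = (∑ u_j²)^{1/2}`, then `Δ_κ |F| ≥ 0` wherever `|F| > 0` (at points with regular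
`x`-coordinate). -/
theorem dunkl_subharmonicity_of_norm
    {d : ℕ} (hd : 1 ≤ d) (R Rp : Finset (Ed d)) (κ : Ed d → ℝ)
    (hRS : IsRootSystem R Rp κ)
    (m : ℕ) (u : Fin m → Ed d × ℝ → ℝ)
    (hu : ∀ j, KHarmonicOn R Rp κ (u j) (upperHS d)) :
    ∀ p ∈ upperHS d, isRegular R p.1 →
      0 < Real.sqrt (∑ j, u j p ^ 2) →
      0 ≤ dunklLap Rp κ (fun q => Real.sqrt (∑ j, u j q ^ 2)) p := by
  intro p hp hreg hpos
  exact dunkl_subharmonicity_of_norm_general hRS.pos_sub hRS.kappa_nonneg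
    (isOpen_upperHS d) hu hp hreg hpos

end
end
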